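/- For 𝔽_q[x,y], the number p_n of pairs (f,g) forming an 𝔽_q-algebra automorphism with max(deg f, deg g) = n, for n > 1, equals (q(q−1)(q+1))² · Σ ((q−1)/q)^k · q^(n_1+⋯+n_k), where the sum is over all ordered factorizations n = n_1⋯n_k with all n_i ≥ 2; for n = 1, p_1 = q³(q−1)²(q+1). -/

import Mathlib

open MvPolynomial

/-- The degree of an automorphism `φ = (f, g)` of `K[x,y]`: `max(deg f, deg g)`. -/
noncomputable def autDeg {K : Type*} [CommSemiring K]
    (φ : MvPolynomial (Fin 2) K ≃ₐ[K] MvPolynomial (Fin 2) K) : ℕ :=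
  max (φ (X 0)).totalDegree (φ (X 1)).totalDegree

/-!
An automorphism `(f, g)` with `deg f ≤ deg g` and `1 < deg g` can always be simplified by
subtracting a multiple of a power of `f` from `g`. To see this, conjugate a translation by the
automorphism: the result is a nontrivial polynomial curve of endomorphisms through the identity
that fixes some coordinate `P` with `P(f, g)` a variable. Taking leading forms for the weights
`(deg f, deg g)` gives such a curve fixing the leading form `Q` of `P`, while `Q` is a relation
between the leading forms `u`, `v` of `f`, `g`. Hence the curve also fixes the factor
`x ^ r - c * y ^ s` of `Q` coming from the minimal relation `u ^ r = c * v ^ s` with `r`, `s`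
coprime, and comparing degrees in the curve parameter after differentiating shows that this is
impossible for `r, s ≥ 2`.

So every automorphism whose first component has degree `d` is a unique product of a reduced one,
whose second component has smaller degree (or is affine), and a shear `(x, y + x ^ k * Q(x))`.
Counting by the degree of the shear gives a recursion over proper divisors of `n`, which is the
recursion obtained by splitting off one factor from an ordered factorization; affine automorphisms
are the base case.
-/

section LeadingForm

variable {σ τ R Γ : Type*} [CommSemiring R] [AddCommMonoid Γ] [PartialOrder Γ]

/-- For the grading of `MvPolynomial σ R` by the weights `w`, all monomials of `p` have weight at
most `d` and the part of `p` of weight `d` is `q`. The form `q` is allowed to vanish. -/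
structure HasLeadingForm (w : σ → Γ) (d : Γ) (p q : MvPolynomial σ R) : Prop where
  weight_le : ∀ m ∈ p.support, Finsupp.weight w m ≤ d
  component_eq : weightedHomogeneousComponent w d p = q

namespace HasLeadingForm

variable {w : σ → Γ} {d e : Γ} {p q p' q' : MvPolynomial σ R}

theorem coeff_eq (h : HasLeadingForm w d p q) {m : σ →₀ ℕ} (hm : Finsupp.weight w m = d) :
    coeff m q = coeff m p := by
  classical
  rw [← h.component_eq, coeff_weightedHomogeneousComponent, if_pos hm]

theorem isWeightedHomogeneous (h : HasLeadingForm w d p q) : IsWeightedHomogeneous w q d :=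
  h.component_eq ▸ weightedHomogeneousComponent_isWeightedHomogeneous d p

theorem of_isWeightedHomogeneous (h : IsWeightedHomogeneous w p d) : HasLeadingForm w d p p :=
  ⟨fun _ hm => (h (mem_support_iff.1 hm)).le, weightedHomogeneousComponent_eq_self h⟩

theorem of_lt (h : HasLeadingForm w d p q) (hde : d < e) : HasLeadingForm w e p 0 :=
  ⟨fun m hm => (h.weight_le m hm).trans hde.le,
    weightedHomogeneousComponent_eq_zero' e p fun m hm => ((h.weight_le m hm).trans_lt hde).ne⟩

theorem zero (w : σ → Γ) (d : Γ) : HasLeadingForm w d (0 : MvPolynomial σ R) 0 :=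
  of_isWeightedHomogeneous (isWeightedHomogeneous_zero R w d)

theorem add (hp : HasLeadingForm w d p q) (hp' : HasLeadingForm w d p' q') :
    HasLeadingForm w d (p + p') (q + q') := by
  classical
  refine ⟨fun m hm => ?_, by rw [map_add, hp.component_eq, hp'.component_eq]⟩
  exact (Finset.mem_union.1 (support_add hm)).elim (hp.weight_le m) (hp'.weight_le m)

theorem sum {ι : Type*} {s : Finset ι} {f g : ι → MvPolynomial σ R}
    (h : ∀ i ∈ s, HasLeadingForm w d (f i) (g i)) :
    HasLeadingForm w d (∑ i ∈ s, f i) (∑ i ∈ s, g i) := by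
  classical
  induction s using Finset.induction_on with
  | empty => exact zero w d
  | insert i s hi ih =>
    rw [Finset.sum_insert hi, Finset.sum_insert hi]
    rw [Finset.forall_mem_insert] at h
    exact h.1.add (ih h.2)

variable [IsOrderedCancelAddMonoid Γ]

theorem mul (hp : HasLeadingForm w d p q) (hp' : HasLeadingForm w e p' q') :
    HasLeadingForm w (d + e) (p * p') (q * q') := by
  classical
  refine ⟨fun m hm => ?_, ?_⟩
  · obtain ⟨x, hx, y, hy, rfl⟩ := Finset.mem_add.1 (support_mul _ _ hm)
    rw [map_add]
    exact add_le_add (hp.weight_le x hx) (hp'.weight_le y hy)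
  ext m
  rw [← hp.component_eq, ← hp'.component_eq, coeff_weightedHomogeneousComponent, coeff_mul,
    coeff_mul, ← Finset.sum_const_zero (s := Finset.HasAntidiagonal.antidiagonal m),
    ← Finset.sum_ite_irrel]
  refine Finset.sum_congr rfl fun ⟨x, y⟩ hxy => ?_
  rw [Finset.HasAntidiagonal.mem_antidiagonal] at hxy
  simp only [coeff_weightedHomogeneousComponent, ← hxy, map_add]
  by_cases hx : coeff x p = 0
  · simp [hx]
  by_cases hy : coeff y p' = 0
  · simp [hy]
  rw [ite_zero_mul_ite_zero]
  simp only [add_eq_add_iff_eq_and_eq (hp.weight_le x (mem_support_iff.2 hx))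
    (hp'.weight_le y (mem_support_iff.2 hy))]

theorem pow (hp : HasLeadingForm w d p q) : ∀ n : ℕ, HasLeadingForm w (n • d) (p ^ n) (q ^ n)
  | 0 => by simpa using of_isWeightedHomogeneous (isWeightedHomogeneous_one R w)
  | n + 1 => by simpa only [pow_succ, succ_nsmul] using (pow hp n).mul hp

theorem prod {ι : Type*} {s : Finset ι} {d : ι → Γ} {f g : ι → MvPolynomial σ R}
    (h : ∀ i ∈ s, HasLeadingForm w (d i) (f i) (g i)) :
    HasLeadingForm w (∑ i ∈ s, d i) (∏ i ∈ s, f i) (∏ i ∈ s, g i) := by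
  classical
  induction s using Finset.induction_on with
  | empty => simpa using of_isWeightedHomogeneous (isWeightedHomogeneous_one R w)
  | insert i s hi ih =>
    rw [Finset.sum_insert hi, Finset.prod_insert hi, Finset.prod_insert hi]
    rw [Finset.forall_mem_insert] at h
    exact h.1.mul (ih h.2)

theorem map_algHom {W : τ → Γ} {F G : MvPolynomial σ R →ₐ[R] MvPolynomial τ R}
    (hp : HasLeadingForm w d p q) (hX : ∀ i, HasLeadingForm W (w i) (F (X i)) (G (X i))) :
    HasLeadingForm W d (F p) (G q) := by
  classical
  have hexpand (H : MvPolynomial σ R →ₐ[R] MvPolynomial τ R) (u : MvPolynomial σ R) :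
      H u = ∑ m ∈ u.support, C (coeff m u) * ∏ i ∈ m.support, H (X i) ^ m i := by
    conv_lhs => rw [aeval_unique H, aeval_def, eval₂_eq]
    rfl
  have hmonomial (m : σ →₀ ℕ) : HasLeadingForm W (Finsupp.weight w m)
      (C (coeff m p) * ∏ i ∈ m.support, F (X i) ^ m i)
      (C (coeff m p) * ∏ i ∈ m.support, G (X i) ^ m i) := by
    rw [← zero_add (Finsupp.weight w m)]
    exact (of_isWeightedHomogeneous (isWeightedHomogeneous_C W _)).mul
      (prod fun i _ => (hX i).pow (m i))
  have hq : G q = ∑ m ∈ p.support, if Finsupp.weight w m = d then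
      C (coeff m p) * ∏ i ∈ m.support, G (X i) ^ m i else 0 := by
    rw [hexpand, ← Finset.sum_filter, ← hp.component_eq, support_weightedHomogeneousComponent]
    refine Finset.sum_congr rfl fun m hm => ?_
    rw [coeff_weightedHomogeneousComponent, if_pos (Finset.mem_filter.1 hm).2]
  rw [hq, hexpand]
  refine sum fun m hm => ?_
  split_ifs with hmd
  · exact hmd ▸ hmonomial m
  · exact (hmonomial m).of_lt ((hp.weight_le m hm).lt_of_ne hmd)

end HasLeadingForm

end LeadingForm

section Deformation

variable {σ R : Type*} [CommRing R]

/-- Setting the parameter `X none` of `R[σ][t]` to zero. -/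
noncomputable def evalParameterZero : MvPolynomial (Option σ) R →ₐ[R] MvPolynomial σ R :=
  aeval fun o => o.elim 0 X

@[simp]
theorem evalParameterZero_X_none : evalParameterZero (X none : MvPolynomial (Option σ) R) = 0 :=
  aeval_X _ _

@[simp]
theorem evalParameterZero_X_some (i : σ) :
    evalParameterZero (X (some i) : MvPolynomial (Option σ) R) = X i :=
  aeval_X _ _

@[simp]
theorem evalParameterZero_rename (p : MvPolynomial σ R) :
    evalParameterZero (rename some p) = p := by
  rw [evalParameterZero, aeval_rename]
  exact aeval_X_left_apply p

theorem coeff_evalParameterZero (p : MvPolynomial (Option σ) R) {m : Option σ →₀ ℕ}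
    (hm : m none = 0) : coeff m.some (evalParameterZero p) = coeff m p := by
  have h : evalParameterZero =
      (((Polynomial.aeval (0 : MvPolynomial σ R)).restrictScalars R).comp
        (optionEquivLeft R σ).toAlgHom) := by
    ext1 (_ | i) <;> simp
  rw [← optionEquivLeft_coeff_some_coeff_none, hm, h, Polynomial.coeff_zero_eq_aeval_zero]
  rfl

theorem degreeOf_none_rename_some (p : MvPolynomial σ R) : degreeOf none (rename some p) = 0 := by
  classical
  refine not_not.1 fun h => ?_
  simpa using vars_rename some p (mem_vars_iff_degreeOf_ne_zero.2 h)

theorem eq_rename_evalParameterZero {p : MvPolynomial (Option σ) R} (hp : none ∉ p.vars) :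
    p = rename some (evalParameterZero p) := by
  obtain ⟨q, rfl⟩ := exists_rename_eq_of_vars_subset_range p some (Option.some_injective σ) <| by
    rintro (_ | i) hi
    · exact absurd hi hp
    · exact ⟨i, rfl⟩
  rw [evalParameterZero_rename]

theorem evalParameterZero_pderiv_some (i : σ) (p : MvPolynomial (Option σ) R) :
    evalParameterZero (pderiv (some i) p) = pderiv i (evalParameterZero p) := by
  induction p using MvPolynomial.induction_on with
  | C a => rw [pderiv_C, algHom_C, algebraMap_eq, pderiv_C, map_zero]
  | add p q hp hq => rw [map_add, map_add, hp, hq, map_add, map_add]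
  | mul_X p o hp =>
    classical
    rcases o with _ | j
    · simp
    · rcases eq_or_ne j i with rfl | hij
      · simp [hp]
      · simp [hp, hij]

/-- A nonconstant polynomial curve of endomorphisms of `R[σ]`, parametrised by `t = X none`, that
passes through the identity at `t = 0`. -/
structure IsNontrivialDeformation (E : MvPolynomial σ R →ₐ[R] MvPolynomial (Option σ) R) :
    Prop where
  evalParameterZero_comp : evalParameterZero.comp E = AlgHom.id R (MvPolynomial σ R)
  ne_rename : E ≠ rename some

theorem isNontrivialDeformation_of_X {E : MvPolynomial σ R →ₐ[R] MvPolynomial (Option σ) R}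
    (h : ∀ i, evalParameterZero (E (X i)) = X i) {i : σ} (hi : E (X i) ≠ X (some i)) :
    IsNontrivialDeformation E where
  evalParameterZero_comp := algHom_ext h
  ne_rename hE := hi (by rw [hE, rename_X])

namespace IsNontrivialDeformation

variable {E : MvPolynomial σ R →ₐ[R] MvPolynomial (Option σ) R}

theorem evalParameterZero_apply (hE : IsNontrivialDeformation E) (u : MvPolynomial σ R) :
    evalParameterZero (E u) = u :=
  DFunLike.congr_fun hE.evalParameterZero_comp u

theorem apply_eq_rename_of_dvd [IsDomain R] (hE : IsNontrivialDeformation E)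
    {u v : MvPolynomial σ R} (huv : u ∣ v) (hv : v ≠ 0) (hEv : E v = rename some v) :
    E u = rename some u := by
  obtain ⟨z, rfl⟩ := huv
  have hne : E u * E z ≠ 0 := by
    rw [← map_mul, hEv]
    exact (map_ne_zero_iff _ (rename_injective some (Option.some_injective σ))).2 hv
  have hdeg : degreeOf none (E u) + degreeOf none (E z) = 0 := by
    rw [← degreeOf_mul_eq (left_ne_zero_of_mul hne) (right_ne_zero_of_mul hne), ← map_mul, hEv,
      degreeOf_none_rename_some]
  have hvars : none ∉ (E u).vars := fun h =>
    mem_vars_iff_degreeOf_ne_zero.1 h (Nat.eq_zero_of_add_eq_zero_right hdeg)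
  rw [eq_rename_evalParameterZero hvars, hE.evalParameterZero_apply]

theorem exists_none_mem_vars_apply_X (hE : IsNontrivialDeformation E) :
    ∃ j, none ∈ (E (X j)).vars := by
  by_contra! hvars
  refine hE.ne_rename (algHom_ext fun j => ?_)
  rw [eq_rename_evalParameterZero (hvars j), hE.evalParameterZero_apply]

end IsNontrivialDeformation

/-- Translating the `k`-th coordinate of an automorphism `ψ` fixes the other coordinates. -/
theorem exists_isNontrivialDeformation_of_algEquiv [Nontrivial R]
    (ψ : MvPolynomial σ R ≃ₐ[R] MvPolynomial σ R) (k : σ) :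
    ∃ E : MvPolynomial σ R →ₐ[R] MvPolynomial (Option σ) R, IsNontrivialDeformation E ∧
      ∀ j ≠ k, E (ψ (X j)) = rename some (ψ (X j)) := by
  classical
  let translate : MvPolynomial σ R →ₐ[R] MvPolynomial (Option σ) R :=
    aeval fun i => rename some (ψ (X i)) + if i = k then X none else 0
  have hzero : evalParameterZero.comp translate = ψ.toAlgHom := by
    ext1 i
    rcases eq_or_ne i k with rfl | h <;> simp [translate, *]
  refine ⟨translate.comp ψ.symm.toAlgHom, ⟨?_, fun h => ?_⟩, fun j hj => ?_⟩
  · rw [← AlgHom.comp_assoc, hzero]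
    ext1 i
    simp
  · have := DFunLike.congr_fun h (ψ (X k))
    simp [translate] at this
  · simp [translate, hj]

theorem weight_option_elim {Γ : Type*} [AddCommMonoid Γ] (a : Γ) (w : σ → Γ)
    (m : Option σ →₀ ℕ) :
    Finsupp.weight (fun o : Option σ => o.elim a w) m = m none • a + Finsupp.weight w m.some := by
  rw [Finsupp.weight_apply, Finsupp.sum_option_index_smul, Finsupp.weight_apply]
  rfl

variable {𝕜 : Type*} [Field 𝕜] [LinearOrder 𝕜] [IsStrictOrderedRing 𝕜]

/-- The weight of `t` is the smallest slope of the Newton polytopes of the `E (X j)`. -/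
theorem IsNontrivialDeformation.exists_weight_parameter [Finite σ]
    {E : MvPolynomial σ R →ₐ[R] MvPolynomial (Option σ) R} (hE : IsNontrivialDeformation E)
    (w : σ → 𝕜) :
    ∃ a : 𝕜,
      (∀ j, ∀ m ∈ (E (X j)).support, Finsupp.weight (fun o : Option σ => o.elim a w) m ≤ w j) ∧
      ∃ j, ∃ m ∈ (E (X j)).support, m none ≠ 0 ∧
        Finsupp.weight (fun o : Option σ => o.elim a w) m = w j := by
  classical
  cases nonempty_fintype σ
  let pairs : Finset (Σ _ : σ, Option σ →₀ ℕ) :=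
    Finset.univ.sigma fun j => {m ∈ (E (X j)).support | m none ≠ 0}
  have hmem (x) : x ∈ pairs ↔ x.2 ∈ (E (X x.1)).support ∧ x.2 none ≠ 0 := by simp [pairs]
  have hpairs : pairs.Nonempty := by
    obtain ⟨j, hj⟩ := hE.exists_none_mem_vars_apply_X
    obtain ⟨m, hm, hmn⟩ := (mem_vars_iff_mem_support _).1 hj
    exact ⟨⟨j, m⟩, (hmem _).2 ⟨hm, Finsupp.mem_support_iff.1 hmn⟩⟩
  obtain ⟨⟨j₀, m₀⟩, hx₀, hmin⟩ := pairs.exists_min_image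
    (fun x => (w x.1 - Finsupp.weight w x.2.some) / (x.2 none : 𝕜)) hpairs
  obtain ⟨hm₀, hm₀'⟩ := (hmem _).1 hx₀
  refine ⟨(w j₀ - Finsupp.weight w m₀.some) / m₀ none, fun j m hm => ?_, j₀, m₀, hm₀, hm₀', ?_⟩
  · rw [weight_option_elim]
    rcases eq_or_ne (m none) 0 with h0 | h0
    · have hcoeff := mem_support_iff.1 hm
      rw [← coeff_evalParameterZero _ h0, hE.evalParameterZero_apply, coeff_X] at hcoeff
      rw [← (ite_ne_right_iff.1 hcoeff).1, h0, zero_smul, zero_add, Finsupp.weight_single, one_smul]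
    · have := hmin ⟨j, m⟩ ((hmem _).2 ⟨hm, h0⟩)
      rw [le_div_iff₀ (by positivity)] at this
      rw [nsmul_eq_mul]
      linarith
  · rw [weight_option_elim, nsmul_eq_mul, mul_div_cancel₀ _ (by positivity)]
    ring

/-- The leading forms of the `E (X i)` define `E'`, where the weight of `t` is chosen so that `t`
still occurs in them. -/
theorem IsNontrivialDeformation.exists_fixing_leadingForm [Finite σ]
    {E : MvPolynomial σ R →ₐ[R] MvPolynomial (Option σ) R} (hE : IsNontrivialDeformation E)
    {w : σ → 𝕜} {d : 𝕜} {g g' : MvPolynomial σ R} (hg : HasLeadingForm w d g g')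
    (hEg : E g = rename some g) :
    ∃ E' : MvPolynomial σ R →ₐ[R] MvPolynomial (Option σ) R, IsNontrivialDeformation E' ∧
      E' g' = rename some g' := by
  obtain ⟨a, hle, j, m, hm, hm0, hmj⟩ := hE.exists_weight_parameter w
  set W : Option σ → 𝕜 := fun o => o.elim a w
  let E' : MvPolynomial σ R →ₐ[R] MvPolynomial (Option σ) R :=
    aeval fun i => weightedHomogeneousComponent W (w i) (E (X i))
  have hE' (i : σ) : HasLeadingForm W (w i) (E (X i)) (E' (X i)) :=
    ⟨hle i, by simp only [E', aeval_X]⟩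
  have hX (i : σ) : HasLeadingForm w (w i) (X i : MvPolynomial σ R) (X i) :=
    .of_isWeightedHomogeneous (isWeightedHomogeneous_X R w i)
  have hsome (i : σ) :
      HasLeadingForm W (w i) (X (some i) : MvPolynomial (Option σ) R) (X (some i)) :=
    .of_isWeightedHomogeneous (isWeightedHomogeneous_X R W (some i))
  refine ⟨E', isNontrivialDeformation_of_X (fun i => ?_) (i := j) fun hj => ?_, ?_⟩
  · have hzero := (hE' i).map_algHom (F := evalParameterZero) (G := evalParameterZero)
        (W := w) <| by
      rintro (_ | i)
      · simpa using .zero w a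
      · simpa [W] using hX i
    rw [hE.evalParameterZero_apply] at hzero
    exact hzero.component_eq.symm.trans (hX i).component_eq
  · have hcoeff := (hE' j).coeff_eq hmj
    classical
    rw [hj, coeff_X, if_neg] at hcoeff
    · exact mem_support_iff.1 hm hcoeff.symm
    · rintro rfl
      simp at hm0
  · have hleft := hg.map_algHom hE'
    have hright := hg.map_algHom (F := rename some) (G := rename some) (W := W) fun i => by
      simpa using hsome i
    rw [hEg] at hleft
    exact hleft.component_eq.symm.trans hright.component_eq

end Deformation

section CuspidalCurve

theorem degreeOf_pderiv_le {σ R : Type*} [CommSemiring R] (i j : σ) (p : MvPolynomial σ R) :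
    degreeOf j (pderiv i p) ≤ degreeOf j p := by
  refine degreeOf_le_iff.2 fun m hm => ?_
  have hmem : m + Finsupp.single i 1 ∈ p.support := by
    rw [mem_support_iff, coeff_pderiv] at hm
    exact mem_support_iff.2 (left_ne_zero_of_mul hm)
  exact (Nat.le_add_right _ _).trans (monomial_le_degreeOf j hmem)

theorem eq_zero_of_mul_eq_mul_of_coprime {r s a b : ℕ} (hr : 2 ≤ r) (hs : 2 ≤ s)
    (hrs : r.Coprime s) (hab : r * a = s * b) (hle : (r - 1) * a ≤ b) : a = 0 := by
  obtain ⟨r, rfl⟩ := Nat.exists_eq_add_of_le hr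
  obtain ⟨s, rfl⟩ := Nat.exists_eq_add_of_le hs
  by_contra ha
  have ha : 0 < a := Nat.pos_of_ne_zero ha
  rw [show 2 + r - 1 = r + 1 by lia] at hle
  have hrs0 : r = 0 ∧ s = 0 := by constructor <;> nlinarith
  rw [hrs0.1, hrs0.2] at hrs
  norm_num at hrs

variable {R : Type*} [CommRing R] {a b : MvPolynomial (Option (Fin 2)) R} {r s : ℕ} {c : R}

/-- The Jacobian determinant of `(a, b)` with respect to the variables other than `t = X none`. -/
noncomputable def jacobian (a b : MvPolynomial (Option (Fin 2)) R) :
    MvPolynomial (Option (Fin 2)) R :=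
  pderiv (some 0) a * pderiv (some 1) b - pderiv (some 1) a * pderiv (some 0) b

theorem jacobian_ne_zero [Nontrivial R] (ha : evalParameterZero a = X 0)
    (hb : evalParameterZero b = X 1) : jacobian a b ≠ 0 := by
  intro h
  have := congrArg evalParameterZero h
  simp [jacobian, evalParameterZero_pderiv_some, ha, hb] at this

theorem pow_mul_jacobian
    (h : a ^ r - C c * b ^ s = rename some (X 0 ^ r - C c * X 1 ^ s)) :
    C (r : R) * a ^ (r - 1) * jacobian a b =
        rename some (C (r : R) * X 0 ^ (r - 1)) * pderiv (some 1) b +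
          rename some (C (c * s) * X 1 ^ (s - 1)) * pderiv (some 0) b ∧
      C (c * s) * b ^ (s - 1) * jacobian a b =
        rename some (C (r : R) * X 0 ^ (r - 1)) * pderiv (some 1) a +
          rename some (C (c * s) * X 1 ^ (s - 1)) * pderiv (some 0) a := by
  have hx := congrArg (pderiv (some (0 : Fin 2))) h
  have hy := congrArg (pderiv (some (1 : Fin 2))) h
  have h01 : pderiv (some 0) (X (some 1) : MvPolynomial (Option (Fin 2)) R) = 0 :=
    pderiv_X_of_ne (by decide)
  have h10 : pderiv (some 1) (X (some 0) : MvPolynomial (Option (Fin 2)) R) = 0 :=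
    pderiv_X_of_ne (by decide)
  simp only [map_sub, pderiv_C_mul, pderiv_pow,
    pderiv_X_self, h01, h10, map_mul, map_pow, map_natCast, rename_C, rename_X, mul_zero,
    mul_one] at hx hy ⊢
  unfold jacobian
  constructor
  · linear_combination pderiv (some 1) b * hx - pderiv (some 0) b * hy
  · linear_combination pderiv (some 1) a * hx - pderiv (some 0) a * hy

theorem degreeOf_none_rename_mul_pderiv_add_le (p q : MvPolynomial (Fin 2) R)
    (i j : Option (Fin 2)) (u : MvPolynomial (Option (Fin 2)) R) :
    degreeOf none (rename some p * pderiv i u + rename some q * pderiv j u) ≤ degreeOf none u := by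
  have hmul (v : MvPolynomial (Fin 2) R) (k : Option (Fin 2)) :
      degreeOf none (rename some v * pderiv k u) ≤ degreeOf none u := by
    refine (degreeOf_mul_le _ _ _).trans ?_
    rw [degreeOf_none_rename_some, zero_add]
    exact degreeOf_pderiv_le k none u
  exact (degreeOf_add_le _ _ _).trans (max_le (hmul p i) (hmul q j))

variable [IsDomain R]

theorem degreeOf_none_mul_eq_of_pow_sub_pow (ha : a ≠ 0) (hb : b ≠ 0) (hc : c ≠ 0)
    {h : MvPolynomial (Fin 2) R} (hab : a ^ r - C c * b ^ s = rename some h) :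
    r * degreeOf none a = s * degreeOf none b := by
  have hcb : degreeOf none (C c * b ^ s) = s * degreeOf none b := by
    rw [degreeOf_C_mul _ _ (mem_nonZeroDivisors_of_ne_zero hc), degreeOf_pow_eq _ _ _ hb]
  rw [← hcb, ← degreeOf_pow_eq _ _ _ ha]
  refine le_antisymm ?_ ?_
  · rw [sub_eq_iff_eq_add.1 hab]
    exact (degreeOf_add_le _ _ _).trans (by rw [degreeOf_none_rename_some]; simp)
  · rw [← sub_eq_iff_eq_add'.2 (sub_eq_iff_eq_add.1 hab), sub_eq_add_neg, ← map_neg]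
    exact (degreeOf_add_le _ _ _).trans (by rw [degreeOf_none_rename_some]; simp)

theorem mul_degreeOf_le_degreeOf_C_mul_pow_mul {σ : Type*} (i : σ) (n : ℕ) {e : R} (he : e ≠ 0)
    {u v : MvPolynomial σ R} (hu : u ≠ 0) (hv : v ≠ 0) :
    n * degreeOf i u ≤ degreeOf i (C e * u ^ n * v) := by
  rw [mul_assoc, degreeOf_C_mul _ _ (mem_nonZeroDivisors_of_ne_zero he),
    degreeOf_mul_eq (pow_ne_zero n hu) hv, degreeOf_pow_eq _ _ _ hu]
  exact Nat.le_add_right _ _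

/-- Differentiating the equation and applying Cramer's rule bounds the degree in `t` of one of
`E (X 0) ^ (r - 1)`, `E (X 1) ^ (s - 1)` by that of the other component. The leading terms in `t`
must cancel, so `r * deg (E (X 0)) = s * deg (E (X 1))`, and both degrees are zero. -/
theorem IsNontrivialDeformation.apply_pow_sub_pow_ne
    {E : MvPolynomial (Fin 2) R →ₐ[R] MvPolynomial (Option (Fin 2)) R}
    (hE : IsNontrivialDeformation E) (hr : 2 ≤ r) (hs : 2 ≤ s) (hrs : r.Coprime s) (hc : c ≠ 0) :
    E (X 0 ^ r - C c * X 1 ^ s) ≠ rename some (X 0 ^ r - C c * X 1 ^ s) := by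
  intro h
  rw [map_sub, map_mul, map_pow, map_pow, algHom_C, algebraMap_eq] at h
  have hX (i : Fin 2) : evalParameterZero (E (X i)) = X i := hE.evalParameterZero_apply (X i)
  have hne (i : Fin 2) : E (X i) ≠ 0 := fun h0 =>
    X_ne_zero (R := R) i (by rw [← hX, h0, map_zero])
  have hJ := jacobian_ne_zero (hX 0) (hX 1)
  have hdeg := degreeOf_none_mul_eq_of_pow_sub_pow (hne 0) (hne 1) hc h
  obtain ⟨h0, h1⟩ := pow_mul_jacobian h
  have hdeg0 : degreeOf none (E (X 0)) = 0 ∨ degreeOf none (E (X 1)) = 0 := by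
    refine (hrs.cast (R := R)).ne_zero_or_ne_zero.imp
      (fun hr0 => eq_zero_of_mul_eq_mul_of_coprime hr hs hrs hdeg ?_)
      (fun hs0 => eq_zero_of_mul_eq_mul_of_coprime hs hr hrs.symm hdeg.symm ?_)
    · refine (mul_degreeOf_le_degreeOf_C_mul_pow_mul none _ hr0 (hne 0) hJ).trans ?_
      exact h0 ▸ degreeOf_none_rename_mul_pderiv_add_le _ _ _ _ _
    · refine (mul_degreeOf_le_degreeOf_C_mul_pow_mul none _ (mul_ne_zero hc hs0) (hne 1)
        hJ).trans ?_
      exact h1 ▸ degreeOf_none_rename_mul_pderiv_add_le _ _ _ _ _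
  have hdeg1 (i : Fin 2) : degreeOf none (E (X i)) = 0 := by
    rcases hdeg0 with hi | hi <;> rw [hi, mul_zero] at hdeg <;> fin_cases i
    · exact hi
    · exact (Nat.mul_eq_zero.1 hdeg.symm).resolve_left (by lia)
    · exact (Nat.mul_eq_zero.1 hdeg).resolve_left (by lia)
    · exact hi
  obtain ⟨j, hj⟩ := hE.exists_none_mem_vars_apply_X
  exact mem_vars_iff_degreeOf_ne_zero.1 hj (hdeg1 j)

end CuspidalCurve

section AlgebraicRelation

section Dehomogenization

variable {R : Type*} [CommRing R] {r s D : ℕ} {Q : MvPolynomial (Fin 2) R}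

/-- The univariate polynomial obtained from `Q` by replacing every monomial `X 0 ^ m * X 1 ^ n`
with `X ^ (m / r)`. If `Q` is homogeneous for the weights `(s, r)` with `r`, `s` coprime, then `Q`
is a monomial times this polynomial in `X 0 ^ r / X 1 ^ s`. -/
noncomputable def dehomogenization (r : ℕ) (Q : MvPolynomial (Fin 2) R) : Polynomial R :=
  ∑ m ∈ Q.support, Polynomial.monomial (m 0 / r) (coeff m Q)

theorem weight_fin_two (a b : ℕ) (m : Fin 2 →₀ ℕ) :
    Finsupp.weight ![a, b] m = m 0 * a + m 1 * b := by
  simp [Finsupp.weight_apply, Finsupp.sum_fintype, Fin.sum_univ_two]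

theorem modEq_of_weight_eq (hrs : r.Coprime s) {m m' : Fin 2 →₀ ℕ}
    (h : Finsupp.weight ![s, r] m = Finsupp.weight ![s, r] m') : m 0 ≡ m' 0 [MOD r] := by
  refine Nat.ModEq.cancel_right_of_coprime hrs (c := s) ?_
  simpa [weight_fin_two, Nat.ModEq] using congrArg (· % r) h

theorem add_mul_div_eq_of_weight_eq (hr : 0 < r) (hrs : r.Coprime s) {m m' : Fin 2 →₀ ℕ}
    (h : Finsupp.weight ![s, r] m = Finsupp.weight ![s, r] m') :
    m 1 + s * (m 0 / r) = m' 1 + s * (m' 0 / r) := by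
  refine Nat.eq_of_mul_eq_mul_left hr ?_
  have hmod : m 0 % r = m' 0 % r := modEq_of_weight_eq hrs h
  rw [weight_fin_two, weight_fin_two, ← Nat.div_add_mod (m 0) r, ← Nat.div_add_mod (m' 0) r,
    hmod] at h
  linear_combination h

theorem dehomogenization_ne_zero (hr : 0 < r) (hrs : r.Coprime s)
    (hQ : IsWeightedHomogeneous ![s, r] Q D) (hQ0 : Q ≠ 0) : dehomogenization r Q ≠ 0 := by
  obtain ⟨m, hm⟩ := support_nonempty.2 hQ0
  intro h
  have hcoeff : (dehomogenization r Q).coeff (m 0 / r) = coeff m Q := by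
    rw [dehomogenization, Polynomial.finsetSum_coeff, Finset.sum_eq_single_of_mem m hm,
      Polynomial.coeff_monomial_same]
    intro m' hm' hne
    refine Polynomial.coeff_monomial_of_ne _ fun hdiv => hne ?_
    have hweight := (hQ (mem_support_iff.1 hm')).trans (hQ (mem_support_iff.1 hm)).symm
    have hmod : m' 0 % r = m 0 % r := modEq_of_weight_eq hrs hweight
    have h0 : m' 0 = m 0 := by rw [← Nat.div_add_mod (m' 0) r, ← hdiv, hmod, Nat.div_add_mod]
    have h1 := add_mul_div_eq_of_weight_eq hr hrs hweight
    rw [h0, Nat.add_right_cancel_iff] at h1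
    exact Finsupp.ext (Fin.forall_fin_two.2 ⟨h0, h1⟩)
  rw [h, Polynomial.coeff_zero] at hcoeff
  exact mem_support_iff.1 hm hcoeff.symm

theorem exists_aeval_eq_aeval_dehomogenization_mul (hr : 0 < r) (hrs : r.Coprime s)
    (hQ : IsWeightedHomogeneous ![s, r] Q D) {A : Type*} [CommRing A] [Algebra R A] {u v ρ : A}
    (hρ : u ^ r = ρ * v ^ s) :
    ∃ i j : ℕ, aeval ![u, v] Q = Polynomial.aeval ρ (dehomogenization r Q) * (u ^ i * v ^ j) := by
  rcases eq_or_ne Q 0 with rfl | hQ0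
  · exact ⟨0, 0, by simp [dehomogenization]⟩
  obtain ⟨m₀, hm₀⟩ := support_nonempty.2 hQ0
  refine ⟨m₀ 0 % r, m₀ 1 + s * (m₀ 0 / r), ?_⟩
  rw [aeval_def, eval₂_eq', dehomogenization, map_sum, Finset.sum_mul]
  refine Finset.sum_congr rfl fun m hm => ?_
  have hweight := (hQ (mem_support_iff.1 hm)).trans (hQ (mem_support_iff.1 hm₀)).symm
  have hmod : m 0 % r = m₀ 0 % r := modEq_of_weight_eq hrs hweight
  rw [Fin.prod_univ_two, Polynomial.aeval_monomial, ← hmod,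
    ← add_mul_div_eq_of_weight_eq hr hrs hweight]
  simp only [Matrix.cons_val_zero, Matrix.cons_val_one]
  conv_lhs => rw [← Nat.div_add_mod (m 0) r, pow_add, pow_mul, hρ, mul_pow]
  ring

end Dehomogenization

variable {K σ : Type*} [Field K] {u v : MvPolynomial σ K} {a b r s D : ℕ}

theorem exists_root_of_aeval_div_eq_zero (hu : u.IsHomogeneous a) (hv : v.IsHomogeneous b)
    (hu0 : u ≠ 0) (hv0 : v ≠ 0) (hab : r * a = s * b) {H : Polynomial K} (hH : H ≠ 0)
    (hroot : Polynomial.aeval (algebraMap _ (FractionRing (MvPolynomial σ K)) u ^ r /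
      algebraMap _ (FractionRing (MvPolynomial σ K)) v ^ s) H = 0) :
    ∃ c : K, c ≠ 0 ∧ H.IsRoot c ∧ u ^ r = C c * v ^ s := by
  set L := FractionRing (MvPolynomial σ K)
  have hinj := IsFractionRing.injective (MvPolynomial σ K) L
  have hint := (isAlgebraic_iff_isIntegral.1 ⟨H, hH, hroot⟩).tower_top (A := MvPolynomial σ K)
  obtain ⟨y, hy⟩ := IsIntegrallyClosed.isIntegral_iff.1 hint
  have hyv : u ^ r = y * v ^ s := hinj <| by
    rw [map_mul, hy, map_pow, map_pow, div_mul_cancel₀]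
    exact pow_ne_zero s ((map_ne_zero_iff _ hinj).2 hv0)
  have hy0 : y ≠ 0 := fun h => pow_ne_zero r hu0 (by rw [hyv, h, zero_mul])
  have hdeg := congrArg totalDegree hyv
  rw [totalDegree_mul_of_isDomain hy0 (pow_ne_zero s hv0),
    (hu.pow r).totalDegree (pow_ne_zero r hu0), (hv.pow s).totalDegree (pow_ne_zero s hv0),
    mul_comm a, mul_comm b, hab, right_eq_add, totalDegree_eq_zero_iff_eq_C] at hdeg
  rw [hdeg] at hyv hy hy0
  refine ⟨_, fun h => hy0 (by rw [h, C_0]), ?_, hyv⟩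
  rw [← hy, ← algebraMap_eq, ← IsScalarTower.algebraMap_apply,
    Polynomial.aeval_algebraMap_apply] at hroot
  simpa using hroot

theorem pow_sub_pow_dvd_of_isRoot_dehomogenization (hr : 0 < r) (hrs : r.Coprime s)
    {Q : MvPolynomial (Fin 2) K} (hQ : IsWeightedHomogeneous ![s, r] Q D) {c : K}
    (hc : (dehomogenization r Q).IsRoot c) : X 0 ^ r - C c * X 1 ^ s ∣ Q := by
  rw [← Ideal.mem_span_singleton, ← Ideal.Quotient.eq_zero_iff_mem]
  set I := Ideal.span {(X 0 ^ r - C c * X 1 ^ s : MvPolynomial (Fin 2) K)}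
  let π := Ideal.Quotient.mkₐ K I
  have hπ : π (X 0) ^ r = algebraMap K _ c * π (X 1) ^ s := by
    rw [← π.commutes, ← map_pow, ← map_pow, ← map_mul]
    exact Ideal.Quotient.eq.2 (Ideal.mem_span_singleton_self _)
  obtain ⟨i, j, h⟩ := exists_aeval_eq_aeval_dehomogenization_mul hr hrs hQ hπ
  have hX : π = aeval ![π (X 0), π (X 1)] :=
    algHom_ext (Fin.forall_fin_two.2 ⟨by simp, by simp⟩)
  change π Q = 0
  rw [hX, h, Polynomial.aeval_algebraMap_apply, Polynomial.coe_aeval_eq_eval, hc.eq_zero, map_zero,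
    zero_mul]

theorem exists_pow_sub_pow_dvd_of_aeval_eq_zero (ha : 0 < a) (hb : 0 < b)
    (hu : u.IsHomogeneous a) (hv : v.IsHomogeneous b) (hu0 : u ≠ 0) (hv0 : v ≠ 0)
    {Q : MvPolynomial (Fin 2) K} (hQ : IsWeightedHomogeneous ![a, b] Q D) (hQ0 : Q ≠ 0)
    (hQuv : aeval ![u, v] Q = 0) :
    ∃ (r s : ℕ) (c : K), 0 < r ∧ 0 < s ∧ r.Coprime s ∧ c ≠ 0 ∧ r * a = s * b ∧
      u ^ r = C c * v ^ s ∧ X 0 ^ r - C c * X 1 ^ s ∣ Q := by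
  obtain ⟨d, s, r, hd, hsr, rfl, rfl⟩ := Nat.exists_coprime' (Nat.gcd_pos_of_pos_left b ha)
  have hr := Nat.pos_of_mul_pos_right hb
  have hab : r * (s * d) = s * (r * d) := by ring
  have hQ' : IsWeightedHomogeneous ![s, r] Q (D / d) := fun m hm => by
    rw [← hQ hm, weight_fin_two, weight_fin_two, ← mul_assoc, ← mul_assoc, ← add_mul,
      Nat.mul_div_cancel _ hd]
  set L := FractionRing (MvPolynomial σ K)
  have hinj := IsFractionRing.injective (MvPolynomial σ K) L
  have huL := (map_ne_zero_iff _ hinj).2 hu0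
  have hvL := (map_ne_zero_iff _ hinj).2 hv0
  obtain ⟨i, j, h⟩ := exists_aeval_eq_aeval_dehomogenization_mul hr hsr.symm hQ'
    (div_mul_cancel₀ (algebraMap _ L u ^ r) (pow_ne_zero s hvL)).symm
  have hLuv : aeval ![algebraMap _ L u, algebraMap _ L v] Q = algebraMap _ L (aeval ![u, v] Q) := by
    rw [← aeval_algebraMap_apply]
    congr 2
    exact funext (Fin.forall_fin_two.2 ⟨rfl, rfl⟩)
  rw [hLuv, hQuv, map_zero, eq_comm,
    mul_eq_zero_iff_right (mul_ne_zero (pow_ne_zero i huL) (pow_ne_zero j hvL))] at h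
  obtain ⟨c, hc0, hc, huv⟩ := exists_root_of_aeval_div_eq_zero hu hv hu0 hv0 hab
    (dehomogenization_ne_zero hr hsr.symm hQ' hQ0) h
  exact ⟨r, s, c, hr, Nat.pos_of_mul_pos_right ha, hsr.symm, hc0, hab, huv,
    pow_sub_pow_dvd_of_isRoot_dehomogenization hr hsr.symm hQ' hc⟩

end AlgebraicRelation

section DegreeReduction

namespace HasLeadingForm

variable {σ R Γ Γ' : Type*} [CommSemiring R] [AddCommMonoid Γ] {w : σ → Γ} {d : Γ}
  {p q : MvPolynomial σ R}

theorem map_weight [LinearOrder Γ] [AddCommMonoid Γ'] [PartialOrder Γ'] {e : Γ →+ Γ'}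
    (he : StrictMono e) (h : HasLeadingForm w d p q) : HasLeadingForm (e ∘ w) (e d) p q := by
  classical
  have hweight (m : σ →₀ ℕ) : Finsupp.weight (e ∘ w) m = e (Finsupp.weight w m) := by
    simp [Finsupp.weight_apply, map_finsuppSum]
  refine ⟨fun m hm => hweight m ▸ he.monotone (h.weight_le m hm), ?_⟩
  ext m
  simp only [← h.component_eq, coeff_weightedHomogeneousComponent, hweight, he.injective.eq_iff]

theorem totalDegree_eq {d : ℕ} (h : HasLeadingForm (1 : σ → ℕ) d p q) (hq : q ≠ 0) :
    p.totalDegree = d := by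
  classical
  obtain ⟨m, hm⟩ := support_nonempty.2 hq
  rw [← h.component_eq, support_weightedHomogeneousComponent, Finset.mem_filter] at hm
  rw [← weightedTotalDegree_one]
  exact (Finset.sup_le h.weight_le).antisymm (hm.2 ▸ le_weightedTotalDegree 1 hm.1)

theorem totalDegree_lt {d : ℕ} (h : HasLeadingForm (1 : σ → ℕ) d p 0) (hd : 0 < d) :
    p.totalDegree < d := by
  rw [← weightedTotalDegree_one]
  refine (Finset.sup_lt_iff hd).2 fun m hm => (h.weight_le m hm).lt_of_ne fun hmd => ?_
  exact mem_support_iff.1 hm (by rw [← h.coeff_eq hmd, coeff_zero])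

end HasLeadingForm

theorem exists_hasLeadingForm_ne_zero {σ R Γ : Type*} [CommSemiring R] [AddCommMonoid Γ]
    [LinearOrder Γ] (w : σ → Γ) {p : MvPolynomial σ R} (hp : p ≠ 0) :
    ∃ d q, HasLeadingForm w d p q ∧ q ≠ 0 := by
  classical
  obtain ⟨m, hm, hmax⟩ := p.support.exists_max_image (Finsupp.weight w) (support_nonempty.2 hp)
  refine ⟨_, _, ⟨hmax, rfl⟩, fun h => mem_support_iff.1 hm ?_⟩
  rw [← coeff_zero m, ← h, coeff_weightedHomogeneousComponent, if_pos rfl]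

theorem exists_mem_vars_symm_apply {σ R : Type*} [CommSemiring R] [Nontrivial R]
    (φ : MvPolynomial σ R ≃ₐ[R] MvPolynomial σ R) (i : σ) :
    ∃ j, i ∈ (φ.symm (X j)).vars := by
  have hbind : bind₁ (fun j => φ.symm (X j)) (φ (X i)) = X i := by
    conv_rhs => rw [← φ.symm_apply_apply (X i)]
    exact (DFunLike.congr_fun (aeval_unique φ.symm.toAlgHom) _).symm
  obtain ⟨j, -, hj⟩ := mem_vars_bind₁ (fun j => φ.symm (X j)) (φ (X i)) (j := i)
    (by rw [hbind, vars_X]; exact Finset.mem_singleton_self i)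
  exact ⟨j, hj⟩

theorem totalDegree_algEquiv_apply_X_pos {σ R : Type*} [CommSemiring R] [Nontrivial R]
    (φ : MvPolynomial σ R ≃ₐ[R] MvPolynomial σ R) (i : σ) : 0 < (φ (X i)).totalDegree := by
  refine Nat.pos_of_ne_zero fun h => ?_
  have hX : X i = C (coeff 0 (φ (X i))) := by
    rw [← φ.symm_apply_apply (X i), totalDegree_eq_zero_iff_eq_C.1 h]
    exact (φ.symm.commutes _).trans (by simp [algebraMap_eq])
  simpa using congrArg totalDegree hX

theorem exists_fixed_leading_relation {R : Type*} [CommRing R] [Nontrivial R]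
    (φ : MvPolynomial (Fin 2) R ≃ₐ[R] MvPolynomial (Fin 2) R) {a b : ℕ}
    {u v : MvPolynomial (Fin 2) R} (hu : HasLeadingForm 1 a (φ (X 0)) u)
    (hv : HasLeadingForm 1 b (φ (X 1)) v) (hb : 1 < b) :
    ∃ (D : ℕ) (Q : MvPolynomial (Fin 2) R)
      (E : MvPolynomial (Fin 2) R →ₐ[R] MvPolynomial (Option (Fin 2)) R),
      Q ≠ 0 ∧ IsWeightedHomogeneous ![a, b] Q D ∧ aeval ![u, v] Q = 0 ∧
        IsNontrivialDeformation E ∧ E Q = rename some Q := by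
  obtain ⟨j, hj⟩ := exists_mem_vars_symm_apply φ 1
  obtain ⟨m, hm, hm1⟩ := (mem_vars_iff_mem_support _).1 hj
  have hP : φ.symm (X j) ≠ 0 := support_nonempty.1 ⟨m, hm⟩
  obtain ⟨D, Q, hQ, hQ0⟩ := exists_hasLeadingForm_ne_zero ![a, b] hP
  have hD : 1 < D := by
    refine hb.trans_le (le_trans ?_ (hQ.weight_le m hm))
    rw [weight_fin_two]
    have hm1 := Nat.pos_of_ne_zero (Finsupp.mem_support_iff.1 hm1)
    exact le_add_left (Nat.le_mul_of_pos_left b hm1)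
  obtain ⟨E, hE, hEfix⟩ := exists_isNontrivialDeformation_of_algEquiv φ.symm (j + 1)
  obtain ⟨E', hE', hEQ⟩ := hE.exists_fixing_leadingForm (𝕜 := ℚ)
    (hQ.map_weight (e := Nat.castAddMonoidHom ℚ) Nat.strictMono_cast)
    (hEfix j (by simp))
  refine ⟨D, Q, E', hQ0, hQ.isWeightedHomogeneous, ?_, hE', hEQ⟩
  have hmap := hQ.map_algHom (F := φ.toAlgHom) (G := aeval ![u, v]) (W := 1)
    (Fin.forall_fin_two.2 ⟨by simpa using hu, by simpa using hv⟩)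
  have hX := (HasLeadingForm.of_isWeightedHomogeneous (isHomogeneous_X R j)).of_lt hD
  rw [← hmap.component_eq, ← hX.component_eq]
  congr 1
  exact φ.apply_symm_apply _

theorem exists_totalDegree_add_lt {K : Type*} [Field K]
    (φ : MvPolynomial (Fin 2) K ≃ₐ[K] MvPolynomial (Fin 2) K)
    (hle : (φ (X 0)).totalDegree ≤ (φ (X 1)).totalDegree) (h1 : 1 < (φ (X 1)).totalDegree) :
    ∃ (c : K) (r : ℕ), (φ (X 1) + C c * φ (X 0) ^ r).totalDegree < (φ (X 1)).totalDegree := by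
  have hφ (i : Fin 2) : φ (X i) ≠ 0 := (map_ne_zero_iff φ φ.injective).2 (X_ne_zero i)
  obtain ⟨a, u, hu, hu0⟩ := exists_hasLeadingForm_ne_zero (1 : Fin 2 → ℕ) (hφ 0)
  obtain ⟨b, v, hv, hv0⟩ := exists_hasLeadingForm_ne_zero (1 : Fin 2 → ℕ) (hφ 1)
  have ha := totalDegree_algEquiv_apply_X_pos φ 0
  rw [hu.totalDegree_eq hu0] at hle ha
  rw [hv.totalDegree_eq hv0] at hle h1 ⊢
  have hb := zero_lt_one.trans h1
  obtain ⟨D, Q, E, hQ0, hQ, hQuv, hE, hEQ⟩ := exists_fixed_leading_relation φ hu hv h1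
  obtain ⟨r, s, c, -, hs, hrs, hc, hab, huv, hdvd⟩ := exists_pow_sub_pow_dvd_of_aeval_eq_zero
    ha hb hu.isWeightedHomogeneous hv.isWeightedHomogeneous hu0 hv0 hQ hQ0 hQuv
  have hsr : s ≤ r := Nat.le_of_mul_le_mul_right (hab ▸ Nat.mul_le_mul_left s hle) ha
  obtain rfl : s = 1 := by
    by_contra hs1
    have hs2 : 2 ≤ s := by lia
    exact hE.apply_pow_sub_pow_ne (hs2.trans hsr) hs2 hrs hc
      (hE.apply_eq_rename_of_dvd hdvd hQ0 hEQ)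
  refine ⟨-c⁻¹, r, HasLeadingForm.totalDegree_lt ?_ hb⟩
  rw [pow_one] at huv
  rw [one_mul] at hab
  have hcancel : C (-c⁻¹) * (C c * v) = -v := by
    rw [← mul_assoc, ← C_mul, neg_mul, inv_mul_cancel₀ hc, C_neg, C_1, neg_one_mul]
  have hpow := (HasLeadingForm.of_isWeightedHomogeneous
    (isWeightedHomogeneous_C 1 (-c⁻¹))).mul (hu.pow r)
  rw [zero_add, smul_eq_mul, hab, huv, hcancel] at hpow
  simpa using hv.add hpow

end DegreeReduction

section PlaneAutomorphisms

theorem totalDegree_polynomial_aeval {σ R : Type*} [CommRing R] [IsDomain R] (f : MvPolynomial σ R)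
    (P : Polynomial R) : (Polynomial.aeval f P).totalDegree = P.natDegree * f.totalDegree := by
  rcases Nat.eq_zero_or_pos f.totalDegree with hf | hf
  · rw [hf, mul_zero, totalDegree_eq_zero_iff_eq_C.1 hf, ← algebraMap_eq,
      Polynomial.aeval_algebraMap_apply, algebraMap_eq, totalDegree_C]
  rcases eq_or_ne P 0 with rfl | hP
  · simp
  have hf0 : f ≠ 0 := fun h => hf.ne' (by rw [h, totalDegree_zero])
  obtain ⟨d, q, hq, hq0⟩ := exists_hasLeadingForm_ne_zero (1 : σ → ℕ) hf0
  have hd := hq.totalDegree_eq hq0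
  have hterm (i : ℕ) : HasLeadingForm (1 : σ → ℕ) (i * d) (P.coeff i • f ^ i)
      (C (P.coeff i) * q ^ i) := by
    rw [smul_eq_C_mul, ← zero_add (i * d)]
    exact (HasLeadingForm.of_isWeightedHomogeneous (isWeightedHomogeneous_C 1 _)).mul (hq.pow i)
  have hlower (i : ℕ) (hi : i ∈ Finset.range P.natDegree) :
      HasLeadingForm (1 : σ → ℕ) (P.natDegree * d) (P.coeff i • f ^ i) 0 :=
    (hterm i).of_lt (Nat.mul_lt_mul_of_pos_right (Finset.mem_range.1 hi) (hd ▸ hf))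
  rw [Polynomial.aeval_eq_sum_range, Finset.sum_range_succ, hd]
  refine ((HasLeadingForm.sum hlower).add (hterm P.natDegree)).totalDegree_eq ?_
  rw [Finset.sum_const_zero, zero_add]
  exact mul_ne_zero (C_ne_zero.2 (Polynomial.leadingCoeff_ne_zero.2 hP)) (pow_ne_zero _ hq0)

/-- The automorphisms of `R[x, y]`. The automorphism `φ` is the pair `(φ (X 0), φ (X 1))`, so that
`φ * ψ` is the pair `ψ` with `φ` substituted into it. -/
abbrev PlaneAut (R : Type*) [CommSemiring R] : Type _ :=
  MvPolynomial (Fin 2) R ≃ₐ[R] MvPolynomial (Fin 2) R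

theorem PlaneAut.ext {R : Type*} [CommSemiring R] {φ ψ : PlaneAut R} (h0 : φ (X 0) = ψ (X 0))
    (h1 : φ (X 1) = ψ (X 1)) : φ = ψ :=
  AlgEquiv.coe_toAlgHom_injective (algHom_ext (Fin.forall_fin_two.2 ⟨h0, h1⟩))

section Shear

variable {R : Type*} [CommRing R]

/-- The triangular automorphism `(x, y + P(x))`. -/
noncomputable def shear (P : Polynomial R) : PlaneAut R :=
  AlgEquiv.ofAlgHom (aeval ![X 0, X 1 + Polynomial.aeval (X 0) P])
    (aeval ![X 0, X 1 - Polynomial.aeval (X 0) P])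
    (algHom_ext (Fin.forall_fin_two.2 (by simp [← Polynomial.aeval_algHom_apply])))
    (algHom_ext (Fin.forall_fin_two.2 (by simp [← Polynomial.aeval_algHom_apply])))

@[simp]
theorem mul_shear_X_zero (φ : PlaneAut R) (P : Polynomial R) :
    (φ * shear P : PlaneAut R) (X 0) = φ (X 0) := by
  simp [shear]

@[simp]
theorem mul_shear_X_one (φ : PlaneAut R) (P : Polynomial R) :
    (φ * shear P : PlaneAut R) (X 1) = φ (X 1) + Polynomial.aeval (φ (X 0)) P := by
  have h : shear P (X 1) = X 1 + Polynomial.aeval (X 0) P := by simp [shear]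
  rw [AlgEquiv.mul_apply, h, map_add, ← Polynomial.aeval_algHom_apply φ (X 0) P]

theorem mul_shear_mul_shear (φ : PlaneAut R) (P Q : Polynomial R) :
    φ * shear P * shear Q = φ * shear (P + Q) :=
  PlaneAut.ext (by simp only [mul_shear_X_zero])
    (by simp only [mul_shear_X_one, mul_shear_X_zero, map_add, add_assoc])

theorem mul_shear_zero (φ : PlaneAut R) : φ * shear 0 = φ :=
  PlaneAut.ext (mul_shear_X_zero φ 0) (by rw [mul_shear_X_one, map_zero, add_zero])

end Shear

section Reduced

variable {K : Type*} [Field K]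

theorem exists_totalDegree_mul_shear_lt (φ : PlaneAut K) :
    ∃ P, ((φ * shear P : PlaneAut K) (X 1)).totalDegree < max (φ (X 0)).totalDegree 2 := by
  induction hn : (φ (X 1)).totalDegree using Nat.strong_induction_on generalizing φ with
  | _ n ih =>
    subst hn
    by_cases h : (φ (X 1)).totalDegree < max (φ (X 0)).totalDegree 2
    · exact ⟨0, by rwa [mul_shear_zero]⟩
    rw [not_lt, max_le_iff] at h
    obtain ⟨c, r, hlt⟩ := exists_totalDegree_add_lt φ h.1 h.2
    have hshear : ((φ * shear (Polynomial.C c * Polynomial.X ^ r) : PlaneAut K) (X 1)).totalDegree <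
        (φ (X 1)).totalDegree := by
      simpa only [mul_shear_X_one, map_mul, map_pow, Polynomial.aeval_C, Polynomial.aeval_X,
        algebraMap_eq] using hlt
    obtain ⟨P, hP⟩ := ih _ hshear _ rfl
    rw [mul_shear_mul_shear, mul_shear_X_zero] at hP
    exact ⟨_, hP⟩

variable (K) in
/-- The automorphisms `(f, g)` with `deg f = d` whose second component cannot be lowered further by
subtracting polynomials in `f`; for `d = 1` these are the affine automorphisms. -/
def reducedAuts (d : ℕ) : Set (PlaneAut K) :=
  {φ | (φ (X 0)).totalDegree = d ∧ (φ (X 1)).totalDegree < max d 2}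

/-- The least `k` such that `f ^ k` has degree at least `max d 2` when `deg f = d`: adding
`f ^ k * Q(f)` with `Q ≠ 0` to the second component of a reduced automorphism `(f, g)` always raises
its degree, whereas adding lower powers of `f` leaves the automorphism reduced. -/
def shearOrder (d : ℕ) : ℕ :=
  if d = 1 then 2 else 1

theorem shearOrder_pos (d : ℕ) : 0 < shearOrder d := by
  unfold shearOrder
  split_ifs <;> lia

theorem max_le_shearOrder_mul {d : ℕ} (hd : 0 < d) : max d 2 ≤ shearOrder d * d := by
  unfold shearOrder
  split_ifs <;> lia

theorem shearOrder_sub_one_mul_lt (d : ℕ) : (shearOrder d - 1) * d < max d 2 := by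
  unfold shearOrder
  split_ifs <;> lia

variable {d : ℕ}

theorem exists_eq_mul_shear {φ : PlaneAut K} (hφ : (φ (X 0)).totalDegree = d) :
    ∃ ψ ∈ reducedAuts K d, ∃ Q, ψ * shear (Polynomial.X ^ shearOrder d * Q) = φ := by
  obtain ⟨P, hP⟩ := exists_totalDegree_mul_shear_lt φ
  rw [hφ] at hP
  set k := shearOrder d
  set S := P %ₘ Polynomial.X ^ k
  set Q := P /ₘ Polynomial.X ^ k
  have hSQ : S + Polynomial.X ^ k * Q = P := Polynomial.modByMonic_add_div P _
  have hk0 : Polynomial.X ^ k ≠ (1 : Polynomial K) := fun h => by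
    have := congrArg Polynomial.natDegree h
    rw [Polynomial.natDegree_X_pow, Polynomial.natDegree_one] at this
    exact (shearOrder_pos d).ne' this
  have hS : (Polynomial.aeval (φ (X 0)) S).totalDegree < max d 2 := by
    rw [totalDegree_polynomial_aeval, hφ]
    refine (Nat.mul_le_mul_right d ?_).trans_lt (shearOrder_sub_one_mul_lt d)
    have := Polynomial.natDegree_modByMonic_lt P (Polynomial.monic_X_pow k) hk0
    rw [Polynomial.natDegree_X_pow] at this
    exact Nat.le_sub_one_of_lt this
  refine ⟨φ * shear (Polynomial.X ^ k * Q), ⟨by rwa [mul_shear_X_zero], ?_⟩, -Q, ?_⟩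
  · have hsub : (φ * shear (Polynomial.X ^ k * Q) : PlaneAut K) (X 1) =
        (φ * shear P : PlaneAut K) (X 1) - Polynomial.aeval (φ (X 0)) S := by
      rw [mul_shear_X_one, mul_shear_X_one, ← hSQ, map_add]
      ring
    rw [hsub]
    exact (totalDegree_sub _ _).trans_lt (max_lt hP hS)
  · rw [mul_shear_mul_shear, mul_neg, add_neg_cancel, mul_shear_zero]

theorem totalDegree_mul_shear_X_one (hd : 0 < d) {ψ : PlaneAut K} (hψ : ψ ∈ reducedAuts K d)
    {Q : Polynomial K} (hQ : Q ≠ 0) :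
    ((ψ * shear (Polynomial.X ^ shearOrder d * Q) : PlaneAut K) (X 1)).totalDegree =
      (Q.natDegree + shearOrder d) * d := by
  have hdeg : (Polynomial.aeval (ψ (X 0)) (Polynomial.X ^ shearOrder d * Q)).totalDegree =
      (Q.natDegree + shearOrder d) * d := by
    rw [totalDegree_polynomial_aeval, Polynomial.natDegree_X_pow_mul _ hQ, hψ.1]
  rw [mul_shear_X_one, totalDegree_add_eq_right_of_totalDegree_lt, hdeg]
  rw [hdeg, add_mul]
  exact (hψ.2.trans_le (max_le_shearOrder_mul hd)).trans_le (Nat.le_add_left _ _)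

theorem injOn_mul_shear (hd : 0 < d) (T : Set (Polynomial K)) :
    Set.InjOn (fun p : PlaneAut K × Polynomial K =>
      p.1 * shear (Polynomial.X ^ shearOrder d * p.2)) (reducedAuts K d ×ˢ T) := by
  rintro ⟨ψ, Q⟩ ⟨hψ, -⟩ ⟨θ, S⟩ ⟨hθ, -⟩ (h : ψ * shear _ = θ * shear _)
  have hQS : ψ * shear (Polynomial.X ^ shearOrder d * (Q - S)) = θ := by
    rw [mul_sub, sub_eq_add_neg, ← mul_shear_mul_shear, h, mul_shear_mul_shear, add_neg_cancel,
      mul_shear_zero]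
  have hQ : Q = S := by
    by_contra hne
    have hdeg := totalDegree_mul_shear_X_one hd hψ (sub_ne_zero.2 hne)
    have hlt := hθ.2.trans_le (max_le_shearOrder_mul hd)
    rw [hQS] at hdeg
    rw [hdeg, add_mul] at hlt
    lia
  rw [hQ, sub_self, mul_zero, mul_shear_zero] at hQS
  rw [hQ, hQS]

theorem ncard_eq_ncard_reducedAuts_mul_ncard (hd : 0 < d) {S : Set (PlaneAut K)}
    {T : Set (Polynomial K)} (hS : ∀ φ ∈ S, (φ (X 0)).totalDegree = d)
    (hST : ∀ ψ ∈ reducedAuts K d, ∀ Q,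
      ψ * shear (Polynomial.X ^ shearOrder d * Q) ∈ S ↔ Q ∈ T) :
    S.ncard = (reducedAuts K d).ncard * T.ncard := by
  have himage : S = (fun p : PlaneAut K × Polynomial K =>
      p.1 * shear (Polynomial.X ^ shearOrder d * p.2)) '' (reducedAuts K d ×ˢ T) := by
    ext φ
    constructor
    · intro hφ
      obtain ⟨ψ, hψ, Q, rfl⟩ := exists_eq_mul_shear (hS φ hφ)
      exact ⟨(ψ, Q), ⟨hψ, (hST ψ hψ Q).1 hφ⟩, rfl⟩
    · rintro ⟨⟨ψ, Q⟩, ⟨hψ, hQ⟩, rfl⟩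
      exact (hST ψ hψ Q).2 hQ
  rw [himage, (injOn_mul_shear hd T).ncard_image, Set.ncard_prod]

theorem totalDegree_X_zero_dvd {φ : PlaneAut K}
    (h : (φ (X 0)).totalDegree < (φ (X 1)).totalDegree) :
    (φ (X 0)).totalDegree ∣ (φ (X 1)).totalDegree := by
  have hpos := totalDegree_algEquiv_apply_X_pos φ 0
  obtain ⟨ψ, hψ, Q, hφ⟩ := exists_eq_mul_shear (φ := φ) rfl
  have hQ : Q ≠ 0 := by
    rintro rfl
    rw [mul_zero, mul_shear_zero] at hφ
    have := hφ ▸ hψ.2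
    lia
  have hdeg := totalDegree_mul_shear_X_one hpos hψ hQ
  rw [hφ] at hdeg
  exact hdeg ▸ Nat.dvd_mul_left _ _

end Reduced

end PlaneAutomorphisms

section Counting

theorem finite_setOf_degree_lt (R : Type*) [Semiring R] [Finite R] (s : ℕ) :
    {Q : Polynomial R | Q.degree < s}.Finite := by
  have : Finite (Polynomial.degreeLT R s) :=
    Finite.of_equiv _ (Polynomial.degreeLTEquiv R s).symm.toEquiv
  exact (Set.toFinite (Polynomial.degreeLT R s : Set (Polynomial R))).subset fun Q hQ =>
    Polynomial.mem_degreeLT.2 hQ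

theorem ncard_setOf_degree_lt (R : Type*) [Semiring R] (s : ℕ) :
    {Q : Polynomial R | Q.degree < s}.ncard = Nat.card R ^ s := by
  have h : {Q : Polynomial R | Q.degree < s} = Polynomial.degreeLT R s :=
    Set.ext fun Q => Polynomial.mem_degreeLT.symm
  rw [h, ← Nat.card_coe_set_eq]
  refine (Nat.card_congr (Polynomial.degreeLTEquiv R s).toEquiv).trans ?_
  rw [Nat.card_fun, Nat.card_fin]

theorem ncard_setOf_degree_eq (R : Type*) [Semiring R] [Finite R] (s : ℕ) :
    {Q : Polynomial R | Q.degree = s}.ncard = (Nat.card R - 1) * Nat.card R ^ s := by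
  have hdiff : {Q : Polynomial R | Q.degree = s} =
      {Q : Polynomial R | Q.degree < (s + 1 : ℕ)} \ {Q : Polynomial R | Q.degree < s} := by
    ext Q
    simp only [Set.mem_ofPred_eq, Set.mem_sdiff, not_lt]
    rcases eq_or_ne Q 0 with rfl | hQ
    · simp
    · rw [Polynomial.degree_eq_natDegree hQ]
      norm_cast
      lia
  have hsub : {Q : Polynomial R | Q.degree < s} ⊆ {Q | Q.degree < (s + 1 : ℕ)} :=
    fun Q (hQ : Q.degree < s) => hQ.trans (by exact_mod_cast Nat.lt_succ_self s)
  rw [hdiff, Set.ncard_sdiff hsub (finite_setOf_degree_lt R s), ncard_setOf_degree_lt,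
    ncard_setOf_degree_lt, pow_succ', Nat.sub_mul, one_mul]

theorem finite_setOf_forall_totalDegree_le (σ R : Type*) [CommRing R] [Finite σ] [Finite R]
    (N : ℕ) : {φ : MvPolynomial σ R ≃ₐ[R] MvPolynomial σ R |
      ∀ i, (φ (X i)).totalDegree ≤ N}.Finite := by
  have hle : {f : MvPolynomial σ R | f.totalDegree ≤ N}.Finite := by
    have : Finite (restrictTotalDegree σ R N) := Module.finite_of_finite R
    exact (Set.toFinite (restrictTotalDegree σ R N : Set (MvPolynomial σ R))).subset fun f hf =>
      (mem_restrictTotalDegree σ N f).2 hf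
  refine Set.Finite.of_injOn (f := fun φ i => φ (X i)) (fun φ hφ => hφ) ?_
    (Set.Finite.pi' fun _ : σ => hle)
  exact fun φ _ ψ _ h => AlgEquiv.coe_toAlgHom_injective (algHom_ext (congrFun h))

theorem finite_setOf_autDeg_le (R : Type*) [CommRing R] [Finite R] (N : ℕ) :
    {φ : PlaneAut R | autDeg φ ≤ N}.Finite :=
  (finite_setOf_forall_totalDegree_le (Fin 2) R N).subset fun _ hφ =>
    Fin.forall_fin_two.2 (max_le_iff.1 hφ)

/-- The automorphism `(y, x)`. -/
noncomputable def swapVars (R : Type*) [CommSemiring R] : PlaneAut R :=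
  renameEquiv R (Equiv.swap 0 1)

theorem mul_swapVars_X_zero {R : Type*} [CommSemiring R] (φ : PlaneAut R) :
    (φ * swapVars R : PlaneAut R) (X 0) = φ (X 1) := by
  simp [swapVars]

theorem mul_swapVars_X_one {R : Type*} [CommSemiring R] (φ : PlaneAut R) :
    (φ * swapVars R : PlaneAut R) (X 1) = φ (X 0) := by
  simp [swapVars]

variable {K : Type*} [Field K]

theorem ncard_setOf_totalDegree_eq [Finite K] {d n : ℕ} (hd : d ∈ n.properDivisors) :
    {φ : PlaneAut K | (φ (X 0)).totalDegree = d ∧ (φ (X 1)).totalDegree = n}.ncard =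
      (reducedAuts K d).ncard * ((Nat.card K - 1) * Nat.card K ^ (n / d - shearOrder d)) := by
  have hd0 : 0 < d := Nat.pos_of_mem_properDivisors hd
  have he := Nat.one_lt_div_of_mem_properDivisors hd
  obtain ⟨e, rfl⟩ := (Nat.mem_properDivisors.1 hd).1
  rw [Nat.mul_div_cancel_left _ hd0] at he ⊢
  have hmax : max d 2 ≤ d * e := max_le (Nat.le_mul_of_pos_right d (Nat.zero_lt_of_lt he))
    (he.trans_le (Nat.le_mul_of_pos_left e hd0))
  have hke : shearOrder d ≤ e := by
    unfold shearOrder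
    split_ifs <;> lia
  rw [← ncard_setOf_degree_eq]
  refine ncard_eq_ncard_reducedAuts_mul_ncard hd0 (fun φ hφ => hφ.1) fun ψ hψ Q => ?_
  rw [Set.mem_ofPred_eq, Set.mem_ofPred_eq, mul_shear_X_zero, and_iff_right hψ.1]
  rcases eq_or_ne Q 0 with rfl | hQ
  · simp [mul_shear_zero, (hψ.2.trans_le hmax).ne]
  · rw [totalDegree_mul_shear_X_one hd0 hψ hQ, mul_comm d, Nat.mul_left_inj hd0.ne',
      Polynomial.degree_eq_natDegree hQ, Nat.cast_inj]
    lia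

theorem ncard_setOf_totalDegree_eq_le {n : ℕ} (hn : 1 < n) :
    {φ : PlaneAut K | (φ (X 0)).totalDegree = n ∧ (φ (X 1)).totalDegree ≤ n}.ncard =
      (reducedAuts K n).ncard * Nat.card K := by
  have hn0 := Nat.zero_lt_of_lt hn
  have hk : shearOrder n = 1 := if_neg hn.ne'
  rw [← pow_one (Nat.card K), ← ncard_setOf_degree_lt]
  refine ncard_eq_ncard_reducedAuts_mul_ncard hn0 (fun φ hφ => hφ.1) fun ψ hψ Q => ?_
  rw [Set.mem_ofPred_eq, Set.mem_ofPred_eq, mul_shear_X_zero, and_iff_right hψ.1]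
  rcases eq_or_ne Q 0 with rfl | hQ
  · have := hψ.2
    rw [max_eq_left hn] at this
    simp [mul_shear_zero, this.le]
  · rw [totalDegree_mul_shear_X_one hn0 hψ hQ, Polynomial.degree_eq_natDegree hQ, Nat.cast_lt, hk,
      mul_le_iff_le_one_left hn0]
    lia

theorem ncard_setOf_totalDegree_lt_eq {n : ℕ} (hn : 1 < n) :
    {φ : PlaneAut K | (φ (X 0)).totalDegree < n ∧ (φ (X 1)).totalDegree = n}.ncard =
      (reducedAuts K n).ncard := by
  have hpreimage : {φ : PlaneAut K | (φ (X 0)).totalDegree < n ∧ (φ (X 1)).totalDegree = n} =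
      (· * swapVars K) ⁻¹' reducedAuts K n := by
    ext φ
    simp only [reducedAuts, Set.mem_preimage, Set.mem_ofPred_eq, mul_swapVars_X_zero,
      mul_swapVars_X_one, max_eq_left (Nat.succ_le_of_lt hn), and_comm]
  have hsurj : reducedAuts K n ⊆ Set.range (· * swapVars K) := fun φ _ =>
    mul_right_surjective (swapVars K) φ
  rw [hpreimage, Set.ncard_preimage_of_injective_subset_range (mul_left_injective _) hsurj]

theorem ncard_setOf_autDeg_eq [Finite K] {n : ℕ} (hn : 1 < n) :
    {φ : PlaneAut K | autDeg φ = n}.ncard = (Nat.card K + 1) * (reducedAuts K n).ncard := by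
  have hunion : {φ : PlaneAut K | autDeg φ = n} =
      {φ | (φ (X 0)).totalDegree = n ∧ (φ (X 1)).totalDegree ≤ n} ∪
        {φ | (φ (X 0)).totalDegree < n ∧ (φ (X 1)).totalDegree = n} := by
    ext φ
    simp only [autDeg, Set.mem_ofPred_eq, Set.mem_union]
    lia
  have hfin : {φ : PlaneAut K | autDeg φ = n}.Finite :=
    (finite_setOf_autDeg_le K n).subset fun _ => le_of_eq
  rw [hunion] at hfin ⊢
  rw [Set.ncard_union_eq (Set.disjoint_left.2 fun φ h h' => h'.1.ne h.1)
    (hfin.subset Set.subset_union_left) (hfin.subset Set.subset_union_right),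
    ncard_setOf_totalDegree_eq_le hn, ncard_setOf_totalDegree_lt_eq hn]
  ring

theorem ncard_reducedAuts_eq_sum [Finite K] {n : ℕ} (hn : 1 < n) :
    (reducedAuts K n).ncard = ∑ d ∈ n.properDivisors, (reducedAuts K d).ncard *
      ((Nat.card K - 1) * Nat.card K ^ (n / d - shearOrder d)) := by
  have hbiUnion : {φ : PlaneAut K | (φ (X 0)).totalDegree < n ∧ (φ (X 1)).totalDegree = n} =
      ⋃ d ∈ (n.properDivisors : Set ℕ),
        {φ | (φ (X 0)).totalDegree = d ∧ (φ (X 1)).totalDegree = n} := by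
    ext φ
    simp only [Set.mem_iUnion, Set.mem_ofPred_eq, Finset.mem_coe, Nat.mem_properDivisors,
      exists_prop]
    constructor
    · rintro ⟨h0, rfl⟩
      exact ⟨_, ⟨totalDegree_X_zero_dvd h0, h0⟩, rfl, rfl⟩
    · rintro ⟨d, ⟨-, hd⟩, rfl, h1⟩
      exact ⟨hd, h1⟩
  rw [← ncard_setOf_totalDegree_lt_eq hn, hbiUnion, Set.Finite.ncard_biUnion
    (Finset.finite_toSet _) (fun d hd => ?_) (fun d _ e _ hde => Set.disjoint_left.2
      fun φ h h' => hde (h.1.symm.trans h'.1)), finsum_mem_coe_finset]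
  · exact Finset.sum_congr rfl fun d hd => ncard_setOf_totalDegree_eq hd
  · exact (finite_setOf_autDeg_le K n).subset fun φ hφ => max_le
      (hφ.1.trans_le (Nat.mem_properDivisors.1 hd).2.le) hφ.2.le

end Counting

section AffineAutomorphisms

section AffineForm

variable {σ R : Type*} [Fintype σ] [CommRing R]

/-- The polynomial `∑ j, a j * X j + b` of degree at most one. -/
noncomputable def affineForm (a : σ → R) (b : R) : MvPolynomial σ R :=
  ∑ j, C (a j) * X j + C b

theorem coeff_single_affineForm (a : σ → R) (b : R) (i : σ) :
    coeff (Finsupp.single i 1) (affineForm a b) = a i := by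
  classical
  have h (j : σ) : (0 : σ →₀ ℕ) ≠ Finsupp.single j 1 := by simp [eq_comm]
  simp [affineForm, coeff_sum, coeff_C_mul, coeff_X, coeff_C, Finsupp.single_left_inj, h]

theorem coeff_zero_affineForm (a : σ → R) (b : R) : coeff 0 (affineForm a b) = b := by
  simp [affineForm, coeff_sum]

theorem affineForm_single_one [DecidableEq σ] (i : σ) :
    affineForm (Pi.single i (1 : R)) 0 = X i := by
  simp [affineForm, Pi.single_apply]

theorem totalDegree_affineForm_le (a : σ → R) (b : R) : (affineForm a b).totalDegree ≤ 1 := by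
  refine (totalDegree_add _ _).trans (max_le (totalDegree_finsetSum_le fun j _ => ?_) ?_)
  · rw [C_mul_X_eq_monomial]
    exact (totalDegree_monomial_le _ _).trans (by simp)
  · rw [totalDegree_C]
    exact zero_le_one

theorem eq_affineForm_of_totalDegree_le_one {f : MvPolynomial σ R} (hf : f.totalDegree ≤ 1) :
    f = affineForm (fun j => coeff (Finsupp.single j 1) f) (coeff 0 f) := by
  ext m
  rcases lt_trichotomy m.degree 1 with hm | hm | hm
  · obtain rfl := (Finsupp.degree_eq_zero_iff m).1 (Nat.lt_one_iff.1 hm)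
    rw [coeff_zero_affineForm]
  · obtain ⟨j, rfl⟩ : ∃ j, m = Finsupp.single j 1 := (Finsupp.sum_eq_one_iff m).1 hm
    rw [coeff_single_affineForm]
  · rw [coeff_eq_zero_of_totalDegree_lt (hf.trans_lt hm),
      coeff_eq_zero_of_totalDegree_lt ((totalDegree_affineForm_le _ _).trans_lt hm)]

theorem affineForm_injective {a a' : σ → R} {b b' : R} (h : affineForm a b = affineForm a' b') :
    a = a' ∧ b = b' :=
  ⟨funext fun i => by rw [← coeff_single_affineForm a b, h, coeff_single_affineForm],
    by rw [← coeff_zero_affineForm a b, h, coeff_zero_affineForm]⟩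

open Matrix in
theorem map_affineForm {A : Type*} [FunLike A (MvPolynomial σ R) (MvPolynomial σ R)]
    [AlgHomClass A R (MvPolynomial σ R) (MvPolynomial σ R)] {φ : A} {M : Matrix σ σ R} {v : σ → R}
    (hφ : ∀ i, φ (X i) = affineForm (M i) (v i)) (a : σ → R) (b : R) :
    φ (affineForm a b) = affineForm (a ᵥ* M) (a ⬝ᵥ v + b) := by
  have hC (c : R) : φ (C c) = C c := AlgHomClass.commutes φ c
  simp only [affineForm, map_add, map_sum, map_mul, hC, hφ, vecMul, dotProduct, mul_add,
    Finset.mul_sum, Finset.sum_mul, Finset.sum_add_distrib, mul_assoc]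
  rw [Finset.sum_comm, add_assoc]

open Matrix in
theorem aeval_affineForm_comp_aeval_affineForm [DecidableEq σ] {M N : Matrix σ σ R} {v w : σ → R}
    (hM : N * M = 1) (hv : N *ᵥ v + w = 0) :
    (aeval fun i => affineForm (M i) (v i)).comp (aeval fun i => affineForm (N i) (w i)) =
      AlgHom.id R (MvPolynomial σ R) := by
  refine algHom_ext fun i => ?_
  have hNM : N i ᵥ* M = Pi.single i 1 := by
    rw [← mul_apply_eq_vecMul, hM]
    exact funext fun j => one_eq_pi_single
  have hNv : N i ⬝ᵥ v + w i = 0 := congrFun hv i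
  rw [AlgHom.comp_apply, aeval_X, map_affineForm (aeval_X _), hNM, hNv, affineForm_single_one,
    AlgHom.id_apply]

open Matrix in
/-- The affine automorphism `x ↦ M x + v`. -/
noncomputable def affineAut [DecidableEq σ] (M : GL σ R) (v : σ → R) :
    MvPolynomial σ R ≃ₐ[R] MvPolynomial σ R :=
  AlgEquiv.ofAlgHom (aeval fun i => affineForm (M.1 i) (v i))
    (aeval fun i => affineForm (M⁻¹.1 i) ((-(M⁻¹.1 *ᵥ v)) i))
    (aeval_affineForm_comp_aeval_affineForm M.inv_mul (add_neg_cancel _))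
    (aeval_affineForm_comp_aeval_affineForm M.mul_inv (by
      rw [mulVec_neg, mulVec_mulVec, M.mul_inv, one_mulVec, neg_add_cancel]))

theorem affineAut_X [DecidableEq σ] (M : GL σ R) (v : σ → R) (i : σ) :
    affineAut M v (X i) = affineForm (M.1 i) (v i) :=
  aeval_X _ i

theorem affineAut_injective [DecidableEq σ] :
    Function.Injective fun p : GL σ R × (σ → R) => affineAut p.1 p.2 := by
  rintro ⟨M, v⟩ ⟨N, w⟩ h
  have hX (i : σ) : M.1 i = N.1 i ∧ v i = w i := affineForm_injective <| by
    rw [← affineAut_X, ← affineAut_X]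
    exact congrArg (fun χ => χ (X i)) h
  exact Prod.ext (Units.ext (funext fun i => (hX i).1)) (funext fun i => (hX i).2)

end AffineForm

section Field

variable {K : Type*} [Field K]

open Matrix in
theorem exists_affineAut_eq {σ : Type*} [Fintype σ] [DecidableEq σ]
    {φ : MvPolynomial σ K ≃ₐ[K] MvPolynomial σ K}
    (h : ∀ i, (φ (X i)).totalDegree ≤ 1) : ∃ M v, affineAut M v = φ := by
  set A : Matrix σ σ K := fun i j => coeff (Finsupp.single j 1) (φ (X i))
  set v : σ → K := fun i => coeff 0 (φ (X i))
  have hφ (i : σ) : φ (X i) = affineForm (A i) (v i) := eq_affineForm_of_totalDegree_le_one (h i)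
  have hA : IsUnit A := by
    rw [← vecMul_injective_iff_isUnit]
    refine (injective_iff_map_eq_zero A.vecMulLinear).2 fun u (hu : u ᵥ* A = 0) => ?_
    have hconst : φ (affineForm u 0) = φ (affineForm 0 (u ⬝ᵥ v)) := by
      rw [map_affineForm hφ, map_affineForm hφ, hu, zero_vecMul, zero_dotProduct, add_zero,
        zero_add]
    exact (affineForm_injective (φ.injective hconst)).1
  refine ⟨hA.unit, v, AlgEquiv.coe_toAlgHom_injective (algHom_ext fun i => ?_)⟩
  exact (affineAut_X hA.unit v i).trans (hφ i).symm

theorem setOf_autDeg_eq_one : {φ : PlaneAut K | autDeg φ = 1} = reducedAuts K 1 := by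
  ext φ
  have h0 := totalDegree_algEquiv_apply_X_pos φ 0
  have h1 := totalDegree_algEquiv_apply_X_pos φ 1
  simp only [autDeg, reducedAuts, Set.mem_ofPred_eq]
  lia

theorem reducedAuts_one_eq_range :
    reducedAuts K 1 =
      Set.range fun p : GL (Fin 2) K × (Fin 2 → K) => affineAut p.1 p.2 := by
  rw [← setOf_autDeg_eq_one]
  ext φ
  constructor
  · intro (hφ : autDeg φ = 1)
    obtain ⟨M, v, hMv⟩ := exists_affineAut_eq (Fin.forall_fin_two.2 (max_le_iff.1 hφ.le))
    exact ⟨(M, v), hMv⟩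
  · rintro ⟨⟨M, v⟩, rfl⟩
    have hle (i : Fin 2) : (affineAut M v (X i)).totalDegree ≤ 1 :=
      affineAut_X M v i ▸ totalDegree_affineForm_le _ _
    exact le_antisymm (max_le (hle 0) (hle 1))
      ((totalDegree_algEquiv_apply_X_pos (affineAut M v) 0).trans_le (le_max_left _ _))

theorem ncard_reducedAuts_one [Finite K] :
    (reducedAuts K 1).ncard = Nat.card K ^ 3 * (Nat.card K - 1) ^ 2 * (Nat.card K + 1) := by
  have := Fintype.ofFinite K
  rw [reducedAuts_one_eq_range, ← Set.image_univ, Set.ncard_image_of_injective _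
    affineAut_injective, Set.ncard_univ, Nat.card_prod, Matrix.card_GL_field, Fin.prod_univ_two,
    Nat.card_fun, ← Nat.card_eq_fintype_card, Nat.card_fin]
  obtain ⟨r, hr⟩ := Nat.exists_eq_succ_of_ne_zero (Nat.card_pos (α := K)).ne'
  have h1 : (r + 1) ^ 2 - 1 = r * (r + 2) := Nat.sub_eq_of_eq_add (by ring)
  have h2 : (r + 1) ^ 2 - (r + 1) = r * (r + 1) := Nat.sub_eq_of_eq_add (by ring)
  simp only [hr, Nat.succ_eq_add_one, Fin.val_zero, Fin.val_one, pow_zero, pow_one, h1, h2,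
    Nat.add_sub_cancel]
  ring

end Field

end AffineAutomorphisms

section OrderedFactorizations

/-- The ordered factorizations of `n` into factors at least `2`. -/
def orderedFactorizations (n : ℕ) : Set (List ℕ) :=
  {l | (∀ m ∈ l, 2 ≤ m) ∧ l.prod = n}

theorem orderedFactorizations_one : orderedFactorizations 1 = {[]} := by
  refine Set.eq_singleton_iff_unique_mem.2 ⟨⟨by simp, rfl⟩, ?_⟩
  rintro l ⟨h, hl⟩
  refine List.eq_nil_iff_forall_not_mem.2 fun m hm => ?_
  have hdvd := List.dvd_prod hm
  rw [hl, Nat.dvd_one] at hdvd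
  exact absurd (h m hm) (hdvd ▸ by decide)

theorem orderedFactorizations_eq_biUnion {n : ℕ} (hn : 1 < n) :
    orderedFactorizations n =
      ⋃ d ∈ n.properDivisors, List.cons (n / d) '' orderedFactorizations d := by
  ext l
  simp only [orderedFactorizations, Set.mem_iUnion, Set.mem_image, Set.mem_ofPred_eq, exists_prop]
  constructor
  · rintro ⟨h, rfl⟩
    match l with
    | [] => simp at hn
    | a :: t =>
      rw [List.prod_cons] at hn ⊢
      obtain ⟨ha, ht⟩ := List.forall_mem_cons.1 h
      have hpos : 0 < t.prod := Nat.pos_of_ne_zero fun h0 => by simp [h0] at hn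
      refine ⟨t.prod, Nat.mem_properDivisors.2 ⟨Nat.dvd_mul_left _ _, ?_⟩, t, ⟨ht, rfl⟩, ?_⟩
      · exact (Nat.lt_mul_iff_one_lt_left hpos).2 ha
      · rw [Nat.mul_div_cancel _ hpos]
  · rintro ⟨d, hd, t, ⟨ht, rfl⟩, rfl⟩
    rw [List.prod_cons, Nat.div_mul_cancel (Nat.mem_properDivisors.1 hd).1]
    exact ⟨List.forall_mem_cons.2 ⟨Nat.one_lt_div_of_mem_properDivisors hd, ht⟩, rfl⟩

theorem finite_orderedFactorizations {n : ℕ} (hn : 0 < n) : (orderedFactorizations n).Finite := by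
  induction n using Nat.strong_induction_on with
  | _ n ih =>
    obtain rfl | h1 : n = 1 ∨ 1 < n := by lia
    · exact orderedFactorizations_one ▸ Set.finite_singleton _
    · rw [orderedFactorizations_eq_biUnion h1]
      exact Set.Finite.biUnion (Finset.finite_toSet _) fun d hd => (ih d
        (Nat.mem_properDivisors.1 hd).2 (Nat.pos_of_mem_properDivisors hd)).image _

variable {R : Type*} [CommSemiring R]

/-- The sum of the products `w n₁ * ⋯ * w nₖ` over all ordered factorizations `n = n₁ ⋯ nₖ`. -/
noncomputable def factorizationSum (w : ℕ → R) (n : ℕ) : R :=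
  ∑ᶠ l ∈ orderedFactorizations n, (l.map w).prod

theorem factorizationSum_one (w : ℕ → R) : factorizationSum w 1 = 1 := by
  rw [factorizationSum, orderedFactorizations_one, finsum_mem_singleton, List.map_nil,
    List.prod_nil]

theorem factorizationSum_eq_sum_properDivisors (w : ℕ → R) {n : ℕ} (hn : 1 < n) :
    factorizationSum w n = ∑ d ∈ n.properDivisors, w (n / d) * factorizationSum w d := by
  have hdisjoint : (n.properDivisors : Set ℕ).PairwiseDisjoint fun d =>
      List.cons (n / d) '' orderedFactorizations d := fun d _ e _ hde => by
    refine Set.disjoint_left.2 ?_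
    rintro _ ⟨s, ⟨-, rfl⟩, rfl⟩ ⟨t, ⟨-, rfl⟩, h⟩
    exact hde (congrArg List.prod (List.tail_eq_of_cons_eq h).symm)
  have hfin (d : ℕ) (hd : d ∈ n.properDivisors) : (orderedFactorizations d).Finite :=
    finite_orderedFactorizations (Nat.pos_of_mem_properDivisors hd)
  rw [factorizationSum, orderedFactorizations_eq_biUnion hn]
  refine (finsum_mem_biUnion hdisjoint (Finset.finite_toSet _) fun d hd =>
    (hfin d hd).image _).trans ?_
  rw [finsum_mem_coe_finset]
  refine Finset.sum_congr rfl fun d hd => ?_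
  rw [finsum_mem_image List.cons_injective.injOn, factorizationSum,
    mul_finsum_mem' _ _ (hfin d hd)]
  exact finsum_mem_congr rfl fun t _ => by rw [List.map_cons, List.prod_cons]

open scoped Classical in
theorem tsum_orderedFactorizations_eq_factorizationSum [TopologicalSpace R] (w : ℕ → R) {n : ℕ}
    (hn : 0 < n) :
    (∑' l : List ℕ, if (∀ m ∈ l, 2 ≤ m) ∧ l.prod = n then (l.map w).prod else 0) =
      factorizationSum w n := by
  rw [factorizationSum, finsum_mem_def, tsum_eq_finsum]
  · exact finsum_congr fun l => by
      simp only [Set.indicator_apply, orderedFactorizations, Set.mem_ofPred_eq]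
  · refine (finite_orderedFactorizations hn).subset fun l hl => ?_
    exact of_not_not fun h => hl (if_neg h)

theorem prod_map_mul_pow (a x : R) (l : List ℕ) :
    (l.map fun m => a * x ^ m).prod = a ^ l.length * x ^ l.sum := by
  induction l with
  | nil => simp
  | cons m t ih =>
    rw [List.map_cons, List.prod_cons, ih, List.length_cons, List.sum_cons]
    ring

end OrderedFactorizations

theorem ncard_reducedAuts_eq_mul_factorizationSum {K : Type*} [Field K] [Finite K] {n : ℕ}
    (hn : 1 < n) :
    ((reducedAuts K n).ncard : ℝ) =
      Nat.card K ^ 2 * (Nat.card K - 1) ^ 2 * (Nat.card K + 1) *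
        factorizationSum (fun m => ((Nat.card K - 1) / Nat.card K : ℝ) * Nat.card K ^ m) n := by
  have hq : (Nat.card K : ℝ) ≠ 0 := Nat.cast_ne_zero.2 Nat.card_pos.ne'
  have hcast : ((Nat.card K - 1 : ℕ) : ℝ) = Nat.card K - 1 := Nat.cast_pred Nat.card_pos
  induction n using Nat.strong_induction_on with
  | _ n ih =>
    rw [ncard_reducedAuts_eq_sum hn, factorizationSum_eq_sum_properDivisors _ hn, Finset.mul_sum,
      Nat.cast_sum]
    refine Finset.sum_congr rfl fun d hd => ?_
    obtain ⟨m, hm⟩ := Nat.exists_eq_add_of_le' (Nat.one_lt_div_of_mem_properDivisors hd)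
    rcases eq_or_ne d 1 with rfl | hd1
    · rw [ncard_reducedAuts_one, factorizationSum_one, hm, shearOrder, if_pos rfl,
        Nat.add_sub_cancel]
      push_cast [hcast]
      rw [pow_add]
      field_simp
    · have hd0 := Nat.pos_of_mem_properDivisors hd
      rw [Nat.cast_mul, ih d (Nat.mem_properDivisors.1 hd).2 (by lia), shearOrder, if_neg hd1, hm]
      push_cast [hcast]
      rw [pow_succ _ (m + 1)]
      field_simp

open scoped Classical in
/-- The number `p_n` of automorphisms of `𝔽_q[x,y]` of degree `n`:
`p₁ = q³(q−1)²(q+1)` and, for `n > 1`,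
`p_n = (q(q−1)(q+1))² Σ ((q−1)/q)^k q^(n₁+⋯+n_k)`, the sum running over all ordered
factorizations `n = n₁⋯n_k` with all `n_i ≥ 2`. -/
theorem stmt_7 (F : Type*) [Field F] [Fintype F] (q : ℕ) (hq : q = Fintype.card F)
    (n : ℕ) :
    (n = 1 →
      Nat.card {φ : MvPolynomial (Fin 2) F ≃ₐ[F] MvPolynomial (Fin 2) F // autDeg φ = n}
        = q ^ 3 * (q - 1) ^ 2 * (q + 1)) ∧
    (1 < n →
      (Nat.card {φ : MvPolynomial (Fin 2) F ≃ₐ[F] MvPolynomial (Fin 2) F // autDeg φ = n} : ℝ)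
        = ((q : ℝ) * ((q : ℝ) - 1) * ((q : ℝ) + 1)) ^ 2 *
            ∑' l : List ℕ,
              if (∀ m ∈ l, 2 ≤ m) ∧ l.prod = n then
                (((q : ℝ) - 1) / (q : ℝ)) ^ l.length * (q : ℝ) ^ (l.sum : ℕ)
              else 0) := by
  obtain rfl : q = Nat.card F := hq.trans Nat.card_eq_fintype_card.symm
  have hncard : Nat.card {φ : PlaneAut F // autDeg φ = n} = {φ : PlaneAut F | autDeg φ = n}.ncard :=
    Nat.card_coe_set_eq _
  refine ⟨?_, fun hn => ?_⟩
  · rintro rfl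
    rw [hncard, setOf_autDeg_eq_one, ncard_reducedAuts_one]
  · rw [hncard, ncard_setOf_autDeg_eq hn, Nat.cast_mul,
      ncard_reducedAuts_eq_mul_factorizationSum hn,
      ← tsum_orderedFactorizations_eq_factorizationSum _ (Nat.zero_lt_of_lt hn)]
    simp only [prod_map_mul_pow]
    push_cast
    ring
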